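/- Fix T > 0 and R₁, R₂ with 1 ≤ R₁ < R₂, and let ρ(t) = sinh(t)·sinh(T−t)/sinh(T) for t ∈ (0, T). Define f(t) = exp(−R₁²/(2ρ(t))) − exp(−R₂²/(2ρ(t))). Then f(t) → 0 as t → 0⁺ and as t → T⁻, f is monotone increasing on (0, T/2] and monotone decreasing on [T/2, T), and f attains its maximum over (0, T) at t = T/2, with value exp(−R₁²·sinh(T)/(2·sinh(T/2)²)) − exp(−R₂²·sinh(T)/(2·sinh(T/2)²)). -/

import Mathlib

open Real Filter Set

lemma aux_anti (a b : ℝ) (ha : 1 ≤ a) (hab : a ≤ b) :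
    AntitoneOn (fun s : ℝ => Real.exp (-a * s) - Real.exp (-b * s)) (Set.Ici 1) := by
  have hd : ∀ s : ℝ, HasDerivAt (fun s : ℝ => Real.exp (-a * s) - Real.exp (-b * s))
      (Real.exp (-a * s) * (-a * 1) - Real.exp (-b * s) * (-b * 1)) s := fun s =>
    (((hasDerivAt_id s).const_mul (-a)).exp).sub (((hasDerivAt_id s).const_mul (-b)).exp)
  apply antitoneOn_of_deriv_nonpos (convex_Ici 1)
  · exact fun s _ => (hd s).continuousAt.continuousWithinAt
  · exact fun s _ => (hd s).differentiableAt.differentiableWithinAt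
  · intro s hs
    rw [interior_Ici] at hs
    have hs : 1 < s := hs
    rw [(hd s).deriv]
    have h1 : Real.exp (-a * s) = Real.exp (-b * s) * Real.exp ((b - a) * s) := by
      rw [← Real.exp_add]; congr 1; ring
    have h2 := Real.add_one_le_exp ((b - a) * s)
    have h3 : b ≤ a * Real.exp ((b - a) * s) := by
      have h5 : b - a ≤ (b - a) * s := by nlinarith
      have h6 : a * (b - a + 1) ≤ a * Real.exp ((b - a) * s) :=
        mul_le_mul_of_nonneg_left (by linarith) (by linarith)
      nlinarith
    have h4 := Real.exp_pos (-b * s)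
    rw [h1]
    nlinarith

theorem stmt_4 (T R₁ R₂ : ℝ) (hT : 0 < T) (hR₁ : 1 ≤ R₁) (hR₁₂ : R₁ < R₂)
    (ρ f : ℝ → ℝ)
    (hρ : ∀ t, ρ t = Real.sinh t * Real.sinh (T - t) / Real.sinh T)
    (hf : ∀ t, f t = Real.exp (-R₁ ^ 2 / (2 * ρ t)) - Real.exp (-R₂ ^ 2 / (2 * ρ t))) :
    Tendsto f (nhdsWithin 0 (Set.Ioi 0)) (nhds 0) ∧
    Tendsto f (nhdsWithin T (Set.Iio T)) (nhds 0) ∧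
    MonotoneOn f (Set.Ioc 0 (T / 2)) ∧
    AntitoneOn f (Set.Ico (T / 2) T) ∧
    (∀ t ∈ Set.Ioo 0 T, f t ≤ f (T / 2)) ∧
    f (T / 2) = Real.exp (-R₁ ^ 2 * Real.sinh T / (2 * Real.sinh (T / 2) ^ 2)) -
      Real.exp (-R₂ ^ 2 * Real.sinh T / (2 * Real.sinh (T / 2) ^ 2)) := by
  have hS : 0 < Real.sinh T := Real.sinh_pos_iff.2 hT
  have hpos : ∀ t ∈ Set.Ioo 0 T, 0 < ρ t := fun t ht => by
    rw [hρ]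
    have := Real.sinh_pos_iff.2 ht.1
    have := Real.sinh_pos_iff.2 (sub_pos.2 ht.2)
    positivity
  have h2ρ : ∀ t, 2 * ρ t = (Real.cosh T - Real.cosh (T - 2 * t)) / Real.sinh T := fun t => by
    have e1 := Real.cosh_add (T - t) t
    have e2 := Real.cosh_sub (T - t) t
    rw [show T - t + t = T by ring] at e1
    rw [show T - t - t = T - 2 * t by ring] at e2
    rw [hρ, e1, e2]; ring
  have hf' : ∀ t, f t = Real.exp (-R₁ ^ 2 * (2 * ρ t)⁻¹) - Real.exp (-R₂ ^ 2 * (2 * ρ t)⁻¹) :=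
    fun t => by rw [hf]; simp only [div_eq_mul_inv]
  have hone : ∀ t ∈ Set.Ioo 0 T, 1 ≤ (2 * ρ t)⁻¹ := fun t ht => by
    have := hpos t ht
    apply (one_le_inv₀ (by positivity)).2
    rw [h2ρ, div_le_one hS]
    have h1 := Real.one_le_cosh (T - 2 * t)
    have h2 := Real.cosh_sub_sinh T
    have h3 : Real.exp (-T) ≤ 1 := Real.exp_le_one_iff.2 (by linarith)
    linarith
  have key : ∀ t ∈ Set.Ioo 0 T, ∀ u ∈ Set.Ioo 0 T, |T - 2 * t| ≤ |T - 2 * u| → f u ≤ f t := by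
    intro t ht u hu h
    rw [hf', hf']
    refine aux_anti (R₁ ^ 2) (R₂ ^ 2) (by nlinarith) (by nlinarith) (hone t ht) (hone u hu) ?_
    have := hpos u hu
    apply inv_anti₀ (by positivity)
    rw [h2ρ, h2ρ]
    have := Real.cosh_le_cosh.2 h
    gcongr
  have hmid : T / 2 ∈ Set.Ioo 0 T := ⟨by linarith, by linarith⟩
  have hc : Continuous ρ := by
    rw [funext hρ]
    have := hS.ne'
    fun_prop
  have lim : ∀ l : Filter ℝ, Tendsto ρ l (nhds 0) → (∀ᶠ t in l, t ∈ Set.Ioo 0 T) →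
      Tendsto f l (nhds 0) := by
    intro l hl he
    have h1 : Tendsto (fun t => 2 * ρ t) l (nhdsWithin 0 (Set.Ioi 0)) := by
      apply tendsto_nhdsWithin_iff.2 ⟨by simpa using hl.const_mul 2, ?_⟩
      filter_upwards [he] with t ht
      have := hpos t ht
      exact mul_pos two_pos this
    have h2 := h1.inv_tendsto_nhdsGT_zero
    have h3 : ∀ R : ℝ, 0 < R → Tendsto (fun t => Real.exp (-R ^ 2 * (2 * ρ t)⁻¹)) l (nhds 0) := by
      intro R hR
      apply Real.tendsto_exp_atBot.comp
      exact h2.const_mul_atTop_of_neg (by nlinarith [pow_pos hR 2])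
    rw [funext hf']
    simpa using (h3 R₁ (by linarith)).sub (h3 R₂ (by linarith))
  refine ⟨?_, ?_, ?_, ?_, ?_, ?_⟩
  · apply lim
    · have := (hc.tendsto 0).mono_left (nhdsWithin_le_nhds (s := Set.Ioi 0))
      simpa [hρ 0] using this
    · exact Ioo_mem_nhdsGT hT
  · apply lim
    · have := (hc.tendsto T).mono_left (nhdsWithin_le_nhds (s := Set.Iio T))
      simpa [hρ T] using this
    · exact Ioo_mem_nhdsLT hT
  · intro t ht u hu h
    apply key u ⟨hu.1, by linarith [hu.2]⟩ t ⟨ht.1, by linarith [ht.2]⟩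
    rw [abs_of_nonneg (by linarith [hu.2]), abs_of_nonneg (by linarith [ht.2])]
    linarith
  · intro t ht u hu h
    apply key t ⟨by linarith [ht.1], ht.2⟩ u ⟨by linarith [hu.1], hu.2⟩
    rw [abs_of_nonpos (by linarith [ht.1]), abs_of_nonpos (by linarith [hu.1])]
    linarith
  · intro t ht
    apply key _ hmid t ht
    rw [show T - 2 * (T / 2) = 0 by ring, abs_zero]
    exact abs_nonneg _
  · have h0 := Real.sinh_pos_iff.2 hmid.1
    have e : 2 * ρ (T / 2) = 2 * Real.sinh (T / 2) ^ 2 / Real.sinh T := by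
      rw [hρ, show T - T / 2 = T / 2 by ring]; ring
    rw [hf, e]
    simp only [div_div_eq_mul_div]
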